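/- The polynomial q(X) = X⁵ + 480 X⁴ + 87264 X³ + 7409920 X² + 287600640 X + 3933241344 is not solvable by radicals over ℚ: its Galois group over ℚ is not a solvable group, so no root of q in ℂ can be expressed in radicals. -/

import Mathlib

/-!
All five roots of the quintic are real, so complex conjugation says nothing about its Galois group;
the argument uses reduction modulo two primes instead.

Modulo `13` the quintic is irreducible (it has no root and no quadratic factor), hence it is
irreducible over `ℚ` and its Galois group has order divisible by `5`. Modulo `41` it is separable,
with exactly the three roots `12`, `26`, `40` in `𝔽₄₁`. Let `K` be a splitting field, `Q` a prime of
`𝓞 K` above `41`, and `σ` a Frobenius element at `Q` (`exists_frobenius`). Reduction modulo `Q` is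
injective on the roots by separability and turns `σ` into `x ↦ x ^ 41`, so `σ` fixes exactly three
roots and is a transposition of the other two (`isSwap_of_reduction`, `exists_isSwap`).

A subgroup of `S₅` of order divisible by `5` that contains a transposition is `S₅`, which is not
solvable (`not_isSolvable_gal`). The statement about roots is then the Abel–Ruffini theorem for
irreducible polynomials.
-/

open Polynomial

/-- The quintic `X⁵ + 480X⁴ + 87264X³ + 7409920X² + 287600640X
+ 3933241344` over `ℚ`. -/
noncomputable def qQuintic : ℚ[X] :=
  X ^ 5 + 480 * X ^ 4 + 87264 * X ^ 3 + 7409920 * X ^ 2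
    + 287600640 * X + 3933241344

namespace Quintic

/-- The quintic `qQuintic` with coefficients read in an arbitrary commutative ring. -/
noncomputable def quintic (R : Type*) [CommRing R] : R[X] :=
  X ^ 5 + 480 * X ^ 4 + 87264 * X ^ 3 + 7409920 * X ^ 2
    + 287600640 * X + 3933241344

lemma map_quintic {R S : Type*} [CommRing R] [CommRing S] (φ : R →+* S) :
    (quintic R).map φ = quintic S := by
  simp [quintic, Polynomial.map_ofNat]

lemma eval_quintic {R : Type*} [CommRing R] (x : R) :
    (quintic R).eval x = x ^ 5 + 480 * x ^ 4 + 87264 * x ^ 3 + 7409920 * x ^ 2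
      + 287600640 * x + 3933241344 := by
  simp [quintic]

lemma quintic_eq_C (R : Type*) [CommRing R] : quintic R =
    X ^ 5 + C 480 * X ^ 4 + C 87264 * X ^ 3 + C 7409920 * X ^ 2
      + C 287600640 * X + C 3933241344 := by
  simp [quintic, ← Polynomial.C_ofNat]

lemma monic_quintic (R : Type*) [CommRing R] : (quintic R).Monic := by
  nontriviality R
  rw [quintic_eq_C]; monicity!

lemma natDegree_quintic (R : Type*) [CommRing R] [Nontrivial R] : (quintic R).natDegree = 5 := by
  rw [quintic_eq_C]; compute_degree!

lemma zmod_no_root : ∀ a : ZMod 13,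
    (-a) ^ 5 + 480 * (-a) ^ 4 + 87264 * (-a) ^ 3 + 7409920 * (-a) ^ 2
      + 287600640 * (-a) + 3933241344 ≠ 0 := by
  decide

/-- Over `𝔽₁₃`, the two coefficients of the remainder of the quintic modulo `X² + aX + b`
never vanish simultaneously. -/
lemma zmod_no_quadratic_factor : ∀ a b : ZMod 13,
    287600640 - b * (87264 - b - a * (480 - a))
      - a * (7409920 - b * (480 - a) - a * (87264 - b - a * (480 - a))) = 0 →
    3933241344 - b * (7409920 - b * (480 - a) - a * (87264 - b - a * (480 - a))) ≠ 0 := by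
  decide

lemma zmod_roots : ∀ n : ZMod 41,
    n ^ 5 + 480 * n ^ 4 + 87264 * n ^ 3 + 7409920 * n ^ 2
      + 287600640 * n + 3933241344 = 0 → n = 12 ∨ n = 26 ∨ n = 40 := by
  decide

lemma irreducible_quintic_zmod [Fact (Nat.Prime 13)] : Irreducible (quintic (ZMod 13)) := by
  have h1 : quintic (ZMod 13) ≠ 1 := by
    intro h
    have := natDegree_quintic (ZMod 13)
    simp [h] at this
  rw [(monic_quintic _).irreducible_iff_lt_natDegree_lt h1, natDegree_quintic]
  intro g hg hdeg hdvd
  have hd : g.natDegree = 1 ∨ g.natDegree = 2 := by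
    simp only [Finset.mem_Ioc] at hdeg; omega
  rcases hd with hd | hd
  · have hge : g = X + C (g.coeff 0) := hg.eq_X_add_C hd
    have hroot : (quintic (ZMod 13)).eval (-g.coeff 0) = 0 := by
      apply eval_eq_zero_of_dvd_of_eval_eq_zero hdvd
      rw [hge]; simp
    rw [eval_quintic] at hroot
    exact zmod_no_root _ hroot
  · obtain ⟨a, b, hge⟩ : ∃ a b, g = X ^ 2 + C a * X + C b := by
      refine ⟨g.coeff 1, g.coeff 0, ?_⟩
      have := g.as_sum_range_C_mul_X_pow
      rw [hd] at this
      have h2 : g.coeff 2 = 1 := by rw [← hd]; exact hg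
      simp only [Finset.sum_range_succ, Finset.range_zero, Finset.sum_empty, h2] at this
      rw [this]; simp; ring
    -- `X³ + cX² + dX + e` is the quotient of the quintic by `g`; the remainder must vanish.
    obtain ⟨c, hc⟩ : ∃ c, c = 480 - a := ⟨_, rfl⟩
    obtain ⟨d, hd'⟩ : ∃ d, d = 87264 - b - a * c := ⟨_, rfl⟩
    obtain ⟨e, he⟩ : ∃ e, e = 7409920 - b * c - a * d := ⟨_, rfl⟩
    have hdiv : quintic (ZMod 13) = g * (X ^ 3 + C c * X ^ 2 + C d * X + C e)
        + (C (287600640 - b * d - a * e) * X + C (3933241344 - b * e)) := by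
      have hc' := congrArg C hc
      have hd'' := congrArg C hd'
      have he' := congrArg C he
      rw [quintic_eq_C, hge]
      simp only [C_sub, C_mul] at hc' hd'' he' ⊢
      linear_combination (-X ^ 4) * hc' - X ^ 3 * hd'' - X ^ 2 * he'
    have hrem : C (287600640 - b * d - a * e) * X + C (3933241344 - b * e) = 0 := by
      apply eq_zero_of_dvd_of_natDegree_lt ((dvd_add_right (Dvd.intro _ rfl)).1 (hdiv ▸ hdvd))
      rw [hd]
      exact (natDegree_linear_le).trans_lt (by norm_num)
    have h1 := congrArg (coeff · 1) hrem
    have h0 := congrArg (coeff · 0) hrem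
    simp only [coeff_add, coeff_C_mul, coeff_X_one, coeff_C_succ, coeff_X_zero, coeff_C_zero,
      coeff_zero, mul_one, mul_zero, add_zero, zero_add] at h0 h1
    subst he hd' hc
    exact zmod_no_quadratic_factor a b h1 h0

lemma irreducible_qQuintic : Irreducible qQuintic := by
  have : Fact (Nat.Prime 13) := ⟨by norm_num⟩
  have hZ : Irreducible (quintic ℤ) :=
    (monic_quintic ℤ).irreducible_of_irreducible_map (Int.castRingHom (ZMod 13)) _
      (by rw [map_quintic]; exact irreducible_quintic_zmod)
  have := ((monic_quintic ℤ).irreducible_iff_irreducible_map_fraction_map (K := ℚ)).1 hZ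
  rwa [map_quintic] at this

lemma separable_quintic (L : Type*) [Field L] [CharP L 41] : (quintic L).Separable := by
  have h41 : (41 : L[X]) = 0 := by
    have := CharP.cast_eq_zero L[X] 41
    exact_mod_cast this
  -- A Bézout identity in `𝔽₄₁[X]`, checked with integer coefficients up to a multiple of `41`.
  refine ⟨18 * X ^ 3 + 29 * X ^ 2 + 22 * X + 10,
    21 * X ^ 4 + 34 * X ^ 3 + 34 * X ^ 2 + 37 * X + 33, ?_⟩
  have hder : derivative (quintic L) = 5 * X ^ 4 + 4 * 480 * X ^ 3 + 3 * 87264 * X ^ 2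
      + 2 * 7409920 * X + 287600640 := by
    simp only [quintic, derivative_add, derivative_mul, derivative_X_pow, derivative_X,
      derivative_ofNat]
    simp only [Nat.cast_ofNat, map_ofNat]
    ring
  rw [hder, quintic]
  linear_combination (3 * X ^ 8 + 1199 * X ^ 7 + 174336 * X ^ 6 + 11124459 * X ^ 5
    + 291367901 * X ^ 4 + 2185236576 * X ^ 3 + 3190261152 * X ^ 2 + 2452136448 * X
    + 1190810599) * h41

/-- In characteristic `41`, the roots of the quintic fixed by Frobenius are the images of its roots
in `𝔽₄₁`. -/
lemma pow_eq_self_iff {L : Type*} [Field L] [CharP L 41] {x : L} (hx : (quintic L).eval x = 0) :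
    x ^ 41 = x ↔ x = 12 ∨ x = 26 ∨ x = 40 := by
  have : Fact (Nat.Prime 41) := ⟨by norm_num⟩
  constructor
  · intro h
    have hb : x ∈ (⊥ : Subfield L) := (Subfield.mem_bot_iff_pow_eq_self L 41).2 h
    rw [← ZMod.fieldRange_castHom_eq_bot 41] at hb
    obtain ⟨n, rfl⟩ := hb
    rw [← map_quintic (ZMod.castHom (dvd_refl 41) L), eval_map_apply, eval_quintic,
      map_eq_zero] at hx
    rcases zmod_roots n hx with rfl | rfl | rfl
    · exact .inl (map_ofNat _ 12)
    · exact .inr (.inl (map_ofNat _ 26))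
    · exact .inr (.inr (map_ofNat _ 40))
  · have key (n : ZMod 41) :
        (ZMod.castHom (dvd_refl 41) L n) ^ 41 = ZMod.castHom (dvd_refl 41) L n := by
      rw [← map_pow, ZMod.pow_card]
    rintro (rfl | rfl | rfl)
    · simpa only [map_ofNat] using key 12
    · simpa only [map_ofNat] using key 26
    · simpa only [map_ofNat] using key 40

/-- A permutation `τ` of five roots that reduces, along `ρ`, to `x ↦ x ^ 41` on the roots of the
quintic in characteristic `41` fixes exactly the roots lying over `12`, `26`, `40`, so it is a
transposition. -/
lemma isSwap_of_reduction {α L : Type*} [Fintype α] [DecidableEq α] [Field L] [CharP L 41]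
    (hα : Fintype.card α = 5) (τ : Equiv.Perm α) (ρ : α → L)
    (hprod : quintic L = ∏ a, (X - C (ρ a))) (hτ : ∀ a, ρ (τ a) = ρ a ^ 41) : τ.IsSwap := by
  have hinj : Function.Injective ρ :=
    separable_prod_X_sub_C_iff.1 (hprod ▸ separable_quintic L)
  have h41 : (41 : L) = 0 := by exact_mod_cast CharP.cast_eq_zero L 41
  have hroot (x : L) : (quintic L).eval x = 0 ↔ ∃ a, ρ a = x := by
    simp [hprod, eval_prod, Finset.prod_eq_zero_iff, sub_eq_zero, eq_comm (a := x)]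
  have hfix (a : α) : τ a = a ↔ ρ a = 12 ∨ ρ a = 26 ∨ ρ a = 40 := by
    rw [← pow_eq_self_iff ((hroot _).2 ⟨a, rfl⟩), ← hτ, hinj.eq_iff]
  obtain ⟨a, ha⟩ := (hroot 12).1 (by
    rw [eval_quintic]; linear_combination 210060288 * h41)
  obtain ⟨b, hb⟩ := (hroot 26).1 (by
    rw [eval_quintic]; linear_combination 443535264 * h41)
  obtain ⟨c, hc⟩ := (hroot 40).1 (by
    rw [eval_quintic]; linear_combination 834371584 * h41)
  have hne (n : ℕ) (hn : ¬ 41 ∣ n) : (n : L) ≠ 0 := by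
    rwa [Ne, CharP.cast_eq_zero_iff L 41]
  have hab : a ≠ b := by
    rintro rfl
    exact hne 14 (by norm_num) (by push_cast; linear_combination ha - hb)
  have hac : a ≠ c := by
    rintro rfl
    exact hne 28 (by norm_num) (by push_cast; linear_combination ha - hc)
  have hbc : b ≠ c := by
    rintro rfl
    exact hne 14 (by norm_num) (by push_cast; linear_combination hb - hc)
  have hsupp : τ.support = ({a, b, c} : Finset α)ᶜ := by
    ext x
    rw [Equiv.Perm.mem_support, Ne, hfix, ← ha, ← hb, ← hc, hinj.eq_iff, hinj.eq_iff, hinj.eq_iff]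
    simp
  rw [← Equiv.Perm.card_support_eq_two, hsupp, Finset.card_compl, hα,
    Finset.card_eq_three.2 ⟨a, b, c, hab, hac, hbc, rfl⟩]

open NumberField in
/-- Existence of a Frobenius element `σ` at a prime of `𝓞 K` above `p`, with `π` the reduction map to
the residue field `L`. The action of `σ` on `𝓞 K` is phrased through its action on `K`. -/
lemma exists_frobenius (K : Type) [Field K] [NumberField K] [IsGalois ℚ K]
    (p : ℕ) [hp : Fact p.Prime] :
    ∃ (L : Type) (_ : Field L) (_ : CharP L p) (π : 𝓞 K →+* L) (σ : K ≃ₐ[ℚ] K),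
      ∀ x y : 𝓞 K, σ x = y → π y = π x ^ p := by
  have hpp : Prime (p : ℤ) := Nat.prime_iff_prime_int.1 hp.out
  have hne : Ideal.span {(p : ℤ)} ≠ ⊥ := by
    simpa using hp.out.ne_zero
  have : (Ideal.span {(p : ℤ)}).IsPrime :=
    (Ideal.span_singleton_prime hpp.ne_zero).2 hpp
  have : (Ideal.span {(p : ℤ)}).IsMaximal := Ideal.IsPrime.isMaximal inferInstance hne
  obtain ⟨Q, hQ, hQp⟩ := Ideal.exists_maximal_ideal_liesOver_of_isIntegral
    (S := 𝓞 K) (Ideal.span {(p : ℤ)})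
  have hQne : Q ≠ ⊥ := Ideal.ne_bot_of_liesOver_of_ne_bot hne Q
  have : Finite (𝓞 K ⧸ Q) := Ideal.finiteQuotientOfFreeOfNeBot Q hQne
  obtain ⟨σ, hσ⟩ := IsArithFrobAt.exists_of_isInvariant ℤ (K ≃ₐ[ℚ] K) Q
  have hcard : Nat.card (ℤ ⧸ Q.under ℤ) = p := by
    rw [← hQp.over]
    simp [Int.card_ideal_quot]
  let _ : Field (𝓞 K ⧸ Q) := Ideal.Quotient.field Q
  refine ⟨𝓞 K ⧸ Q, inferInstance, ?_, Ideal.Quotient.mk Q, σ, ?_⟩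
  · refine (CharP.charP_iff_prime_eq_zero hp.out).2 ?_
    have hmem : algebraMap ℤ (𝓞 K) p ∈ Q := by
      rw [← Ideal.mem_comap]
      change (p : ℤ) ∈ Q.under ℤ
      rw [← hQp.over]
      exact Ideal.mem_span_singleton_self _
    simpa using Ideal.Quotient.eq_zero_iff_mem.2 hmem
  · intro x y hxy
    have h := hσ x
    rw [hcard, ← Ideal.Quotient.eq, map_pow] at h
    rw [← h]
    congr 1
    ext
    exact hxy.symm

open NumberField in
/-- The Frobenius at a prime above `41` acts on the roots of `qQuintic` as a transposition. -/
lemma exists_isSwap (K : Type) [Field K] [NumberField K] [IsGalois ℚ K]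
    [Fact ((qQuintic.map (algebraMap ℚ K)).Splits)] [DecidableEq (qQuintic.rootSet K)] :
    ∃ τ ∈ (Gal.galActionHom qQuintic K).range, τ.IsSwap := by
  classical
  have : Fact (Nat.Prime 41) := ⟨by norm_num⟩
  obtain ⟨L, _, _, π, σ, hσ⟩ := exists_frobenius K 41
  have hsplit := Fact.out (p := (qQuintic.map (algebraMap ℚ K)).Splits)
  have hroot (α : qQuintic.rootSet K) : IsIntegral ℤ (α : K) := by
    refine ⟨quintic ℤ, monic_quintic ℤ, ?_⟩
    rw [← eval_map, map_quintic, ← map_quintic (algebraMap ℚ K), eval_map]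
    exact (mem_rootSet.1 α.2).2
  let r (α : qQuintic.rootSet K) : 𝓞 K := ⟨α, hroot α⟩
  have hprodK : quintic K = ∏ α : qQuintic.rootSet K, (X - C (α : K)) := by
    have h := hsplit.eq_prod_roots_of_monic ((monic_quintic ℚ).map _)
    have hnodup : (qQuintic.aroots K).Nodup := nodup_roots irreducible_qQuintic.separable.map
    rw [← map_quintic (algebraMap ℚ K)]
    refine h.trans ?_
    change ((qQuintic.aroots K).map _).prod = _
    have hset : (qQuintic.rootSet K).toFinset = (qQuintic.aroots K).toFinset := by
      ext a; simp [rootSet_def]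
    rw [Finset.prod_set_coe (f := fun a : K => X - C a), hset,
      Finset.prod, Multiset.toFinset_val, hnodup.dedup]
  have hprodO : quintic (𝓞 K) = ∏ α, (X - C (r α)) := by
    apply map_injective (algebraMap (𝓞 K) K) RingOfIntegers.coe_injective
    rw [map_quintic, hprodK, Polynomial.map_prod]
    refine Finset.prod_congr rfl fun α _ => ?_
    rw [Polynomial.map_sub, map_X, map_C]
    rfl
  refine ⟨_, ⟨Gal.restrict qQuintic K σ, rfl⟩, ?_⟩
  refine isSwap_of_reduction ?_ _ (fun α => π (r α)) ?_ ?_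
  · rw [card_rootSet_eq_natDegree irreducible_qQuintic.separable hsplit]
    exact natDegree_quintic ℚ
  · rw [← map_quintic π, hprodO, Polynomial.map_prod]
    simp
  · intro α
    apply hσ
    exact (Gal.galActionHom_restrict qQuintic K σ α).symm

lemma not_isSolvable_gal_of_isSplittingField (K : Type) [Field K] [NumberField K]
    [IsSplittingField ℚ K qQuintic] : ¬ Group.IsSolvable qQuintic.Gal := by
  classical
  have : Fact ((qQuintic.map (algebraMap ℚ K)).Splits) := ⟨IsSplittingField.splits K qQuintic⟩
  have : IsGalois ℚ K :=
    .of_separable_splitting_field (p := qQuintic) irreducible_qQuintic.separable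
  obtain ⟨τ, hτ, hswap⟩ := exists_isSwap K
  have hcard : Fintype.card (qQuintic.rootSet K) = 5 :=
    (card_rootSet_eq_natDegree irreducible_qQuintic.separable Fact.out).trans (natDegree_quintic ℚ)
  have htop : (Gal.galActionHom qQuintic K).range = ⊤ := by
    refine Equiv.Perm.subgroup_eq_top_of_swap_mem (by rw [hcard]; norm_num) ?_ hτ hswap
    have h5 := Gal.prime_degree_dvd_card irreducible_qQuintic
      (by rw [show qQuintic.natDegree = 5 from natDegree_quintic ℚ]; norm_num)
    rw [show qQuintic.natDegree = 5 from natDegree_quintic ℚ] at h5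
    rw [hcard, Fintype.card_eq_nat_card, ← Nat.card_congr (MonoidHom.ofInjective
      (Gal.galActionHom_injective qQuintic K)).toEquiv]
    exact h5
  intro hsol
  refine Equiv.Perm.not_isSolvable (qQuintic.rootSet K) ?_
    (Group.isSolvable_of_surjective (MonoidHom.range_eq_top.1 htop))
  rw [Cardinal.mk_fintype, hcard]
  norm_num

lemma not_isSolvable_gal : ¬ Group.IsSolvable qQuintic.Gal := by
  have : NumberField qQuintic.SplittingField := ⟨⟩
  -- The `ℚ`-algebra structure of a splitting field and the one coming from characteristic zero
  -- are not reducibly equal; they agree because `Algebra ℚ _` is a subsingleton.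
  have : @IsSplittingField ℚ qQuintic.SplittingField _ _ DivisionRing.toRatAlgebra qQuintic := by
    convert IsSplittingField.splittingField qQuintic
    exact Subsingleton.elim _ _
  exact not_isSolvable_gal_of_isSplittingField qQuintic.SplittingField

end Quintic

/-- `qQuintic` is not solvable by radicals over `ℚ`: its Galois
group over `ℚ` is not solvable, and no complex root of it lies in the field of
elements of `ℂ` expressible in radicals over `ℚ`. -/
theorem stmt8 :
    ¬ IsSolvable qQuintic.Gal ∧
    ∀ x : ℂ, aeval x qQuintic = 0 → x ∉ solvableByRad ℚ ℂ := by
  refine ⟨Quintic.not_isSolvable_gal, fun x hx hrad => Quintic.not_isSolvable_gal ?_⟩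
  exact isSolvable_gal_of_irreducible hrad Quintic.irreducible_qQuintic hx
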